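/- arXiv:math/0608199 — 5 statements merged into one kernel-verified Lean document; each statement's English description precedes it below -/
import Mathlib

section
/- Let G be a simple graph on vertex set [n] with clique number ω. Then for every vector x = (x_1,...,x_n) ∈ ℝ^n with x ≥ 0 (all coordinates nonnegative), the chain of inequalities ρ_1(G,x) ≥ ρ_2(G,x)^{1/2} ≥ ··· ≥ ρ_ω(G,x)^{1/ω} holds; equivalently, for every integer s with 1 ≤ s < ω, ρ_{s+1}(G,x)^{1/(s+1)} ≤ ρ_s(G,x)^{1/s}. -/
open Finset

/-- `fClique G s x` is the clique polynomial `f_s(G,x) = Σ_{S an s-clique of G} Π_{i ∈ S} x_i`. -/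
def fClique {n : ℕ} (G : SimpleGraph (Fin n)) [DecidableRel G.Adj] (s : ℕ)
    (x : Fin n → ℝ) : ℝ :=
  ∑ S ∈ G.cliqueFinset s, ∏ i ∈ S, x i

/-!
If `u` and `v` are distinct and nonadjacent, no clique contains both, so every clique polynomial is
affine in `(x_u, x_v)`. Moving `(x_u, x_v)` along the line on which `f_s` is constant, in the
direction in which `f_{s+1}` does not decrease, until one of the two coordinates vanishes, shrinks
the support of `x`. Iterating, one may assume that the support is a clique. It has at most `ω`
elements, so some `ω`-element set `T` contains it, and then `f_k(G, x)` is the `k`-th elementary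
symmetric polynomial of `(x_i)_{i ∈ T}`: the claim becomes Maclaurin's inequality, which follows
from Newton's inequalities.
-/

section LogConcave

variable {R : Type*} [CommRing R] [LinearOrder R] [IsStrictOrderedRing R]

theorem mul_le_mul_of_mul_le_sq {a b c d : R} (hb : 0 ≤ b) (hc : 0 ≤ c) (hd : 0 ≤ d)
    (hac : a * c ≤ b ^ 2) (hbd : b * d ≤ c ^ 2) (hbc : b = 0 → c = 0) (hcd : c = 0 → d = 0) :
    a * d ≤ b * c := by
  rcases hc.eq_or_lt with hc₀ | hc₀
  · simp [← hc₀, hcd hc₀.symm]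
  have hb₀ : 0 < b := hb.lt_of_ne fun h ↦ hc₀.ne' (hbc h.symm)
  refine le_of_mul_le_mul_right ?_ (mul_pos hb₀ hc₀)
  calc a * d * (b * c) = a * c * (b * d) := by ring
    _ ≤ b ^ 2 * c ^ 2 := mul_le_mul hac hbd (mul_nonneg hb hd) (sq_nonneg b)
    _ = b * c * (b * c) := by ring

theorem pow_le_pow_succ_of_mul_le_sq {p : ℕ → R} (hp : ∀ k, 0 ≤ p k) (hp₀ : p 0 = 1)
    (hzero : ∀ k, p k = 0 → p (k + 1) = 0) (hlog : ∀ k, p k * p (k + 2) ≤ p (k + 1) ^ 2) (k : ℕ) :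
    p (k + 1) ^ k ≤ p k ^ (k + 1) := by
  induction k with
  | zero => simp [hp₀]
  | succ k ih =>
    rcases (hp (k + 1)).eq_or_lt with h | hpos
    · simp [hzero _ h.symm, ← h]
    refine le_of_mul_le_mul_left ?_ (pow_pos hpos k)
    calc p (k + 1) ^ k * p (k + 2) ^ (k + 1)
        ≤ p k ^ (k + 1) * p (k + 2) ^ (k + 1) :=
          mul_le_mul_of_nonneg_right ih (pow_nonneg (hp _) _)
      _ = (p k * p (k + 2)) ^ (k + 1) := (mul_pow ..).symm
      _ ≤ (p (k + 1) ^ 2) ^ (k + 1) := pow_le_pow_left₀ (mul_nonneg (hp _) (hp _)) (hlog k) _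
      _ = p (k + 1) ^ k * p (k + 1) ^ (k + 1 + 1) := by ring

/-- With `N + 1 = i + j`, the three parenthesised sums are `N + 1` times the entries `i - 1`, `i`
and `i + 1` of the sequence of normalized elementary symmetric polynomials after adjoining a
variable `x` to `N` others, when `a, b, c, d` are its entries `i - 2, …, i + 1` before. -/
theorem newton_inequality_adjoin {a b c d x i j : R} (hx : 0 ≤ x) (hi : 1 ≤ i) (hj : 1 ≤ j)
    (hac : a * c ≤ b ^ 2) (hbd : b * d ≤ c ^ 2) (had : a * d ≤ b * c) :
    ((j + 1) * b + (i - 1) * (x * a)) * ((j - 1) * d + (i + 1) * (x * c))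
      ≤ (j * c + i * (x * b)) ^ 2 := by
  have hi₀ : 0 ≤ i - 1 := sub_nonneg.2 hi
  have hj₀ : 0 ≤ j - 1 := sub_nonneg.2 hj
  have hac' := mul_le_mul_of_nonneg_left hac
    (mul_nonneg (sq_nonneg x) (mul_nonneg hi₀ (by linarith : 0 ≤ i + 1)))
  have hbd' := mul_le_mul_of_nonneg_left hbd (mul_nonneg hj₀ (by linarith : 0 ≤ j + 1))
  have had' := mul_le_mul_of_nonneg_left had (mul_nonneg hx (mul_nonneg hj₀ hi₀))
  linear_combination hac' + hbd' + had' + sq_nonneg (c - x * b)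

end LogConcave

theorem rpow_one_div_le_rpow_one_div_of_pow_le_pow {a b : ℝ} (ha : 0 ≤ a) (hb : 0 ≤ b) {m n : ℕ}
    (hm : m ≠ 0) (hn : n ≠ 0) (h : a ^ m ≤ b ^ n) :
    a ^ (1 / (n : ℝ)) ≤ b ^ (1 / (m : ℝ)) := by
  rw [one_div, one_div]
  calc a ^ (n : ℝ)⁻¹ = ((a ^ m) ^ (m : ℝ)⁻¹) ^ (n : ℝ)⁻¹ := by rw [Real.pow_rpow_inv_natCast ha hm]
    _ ≤ ((b ^ n) ^ (m : ℝ)⁻¹) ^ (n : ℝ)⁻¹ := by gcongr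
    _ = ((b ^ n) ^ (n : ℝ)⁻¹) ^ (m : ℝ)⁻¹ := by
        rw [← Real.rpow_mul (pow_nonneg hb n), mul_comm, Real.rpow_mul (pow_nonneg hb n)]
    _ = b ^ (m : ℝ)⁻¹ := by rw [Real.pow_rpow_inv_natCast hb hn]

section Esymm

theorem esymm_zero {R : Type*} [CommSemiring R] (m : Multiset R) : m.esymm 0 = 1 := by
  simp [Multiset.esymm]

theorem esymm_cons_succ {R : Type*} [CommSemiring R] (a : R) (m : Multiset R) (k : ℕ) :
    (a ::ₘ m).esymm (k + 1) = m.esymm (k + 1) + a * m.esymm k := by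
  simp [Multiset.esymm, Multiset.powersetCard_cons, Multiset.sum_map_mul_left]

theorem esymm_eq_zero_of_card_lt {R : Type*} [CommSemiring R] {m : Multiset R} {k : ℕ}
    (h : m.card < k) : m.esymm k = 0 := by
  simp [Multiset.esymm, Multiset.powersetCard_eq_empty k h]

variable {R : Type*} [CommRing R] [LinearOrder R] [IsStrictOrderedRing R]

theorem esymm_nonneg {m : Multiset R} (hm : ∀ a ∈ m, 0 ≤ a) (k : ℕ) : 0 ≤ m.esymm k := by
  refine Multiset.sum_nonneg fun b hb ↦ ?_
  obtain ⟨t, ht, rfl⟩ := Multiset.mem_map.1 hb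
  exact Multiset.prod_nonneg fun a ha ↦
    hm a (Multiset.mem_of_le (Multiset.mem_powersetCard.1 ht).1 ha)

theorem esymm_succ_eq_zero {m : Multiset R} (hm : ∀ a ∈ m, 0 ≤ a) {k : ℕ} (h : m.esymm k = 0) :
    m.esymm (k + 1) = 0 := by
  induction m using Multiset.induction_on generalizing k with
  | empty => exact esymm_eq_zero_of_card_lt (by simp)
  | cons a m ih =>
    obtain ⟨ha, hm⟩ := Multiset.forall_mem_cons.1 hm
    cases k with
    | zero => simp [esymm_zero] at h
    | succ k =>
      rw [esymm_cons_succ, add_eq_zero_iff_of_nonneg (esymm_nonneg hm _)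
        (mul_nonneg ha (esymm_nonneg hm _))] at h
      have hmul : a * m.esymm (k + 1) = 0 := by rw [h.1, mul_zero]
      rw [esymm_cons_succ, ih hm h.1, hmul, add_zero]

end Esymm

section EsymmMean

variable {𝕜 : Type*} [Field 𝕜]

/-- The normalized elementary symmetric polynomial `e_k(m) / C(|m|, k)` of a multiset `m`; for
`k > |m|` both `e_k(m)` and the binomial coefficient vanish and the value is `0`. -/
noncomputable def esymmMean (m : Multiset 𝕜) (k : ℕ) : 𝕜 :=
  m.esymm k / (m.card.choose k : 𝕜)

theorem esymmMean_zero (m : Multiset 𝕜) : esymmMean m 0 = 1 := by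
  simp [esymmMean, esymm_zero]

theorem esymmMean_eq_zero_of_card_lt {m : Multiset 𝕜} {k : ℕ} (h : m.card < k) :
    esymmMean m k = 0 := by
  simp [esymmMean, esymm_eq_zero_of_card_lt h]

theorem esymmMean_mul_choose [CharZero 𝕜] (m : Multiset 𝕜) (k : ℕ) :
    esymmMean m k * (m.card.choose k : 𝕜) = m.esymm k := by
  rcases le_or_gt k m.card with h | h
  · exact div_mul_cancel₀ _ (Nat.cast_ne_zero.2 (Nat.choose_pos h).ne')
  · simp [esymmMean, esymm_eq_zero_of_card_lt h]

theorem card_add_one_mul_esymmMean_cons [CharZero 𝕜] (a : 𝕜) (m : Multiset 𝕜) (k : ℕ) :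
    ((m.card : 𝕜) + 1) * esymmMean (a ::ₘ m) (k + 1) =
      ((m.card : 𝕜) - k) * esymmMean m (k + 1) + ((k : 𝕜) + 1) * (a * esymmMean m k) := by
  rcases lt_or_ge m.card k with h | h
  · simp [esymmMean_eq_zero_of_card_lt, h, h.trans (Nat.lt_succ_self k)]
  have hchoose : ((m.card + 1).choose (k + 1) : 𝕜) ≠ 0 :=
    Nat.cast_ne_zero.2 (Nat.choose_pos (Nat.succ_le_succ h)).ne'
  have absorb : ((m.card : 𝕜) + 1) * (m.card.choose k : 𝕜) =
      ((m.card + 1).choose (k + 1) : 𝕜) * ((k : 𝕜) + 1) := by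
    exact_mod_cast Nat.add_one_mul_choose_eq m.card k
  have pascal : ((m.card + 1).choose (k + 1) : 𝕜) =
      (m.card.choose k : 𝕜) + (m.card.choose (k + 1) : 𝕜) := by
    exact_mod_cast Nat.choose_succ_succ m.card k
  have recurrence : esymmMean (a ::ₘ m) (k + 1) * ((m.card + 1).choose (k + 1) : 𝕜) =
      esymmMean m (k + 1) * (m.card.choose (k + 1) : 𝕜) +
        a * (esymmMean m k * (m.card.choose k : 𝕜)) := by
    rw [esymmMean_mul_choose, esymmMean_mul_choose, ← esymm_cons_succ, ← esymmMean_mul_choose,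
      Multiset.card_cons]
  refine mul_right_cancel₀ hchoose ?_
  linear_combination ((m.card : 𝕜) + 1) * recurrence +
    (a * esymmMean m k - esymmMean m (k + 1)) * absorb -
    ((m.card : 𝕜) + 1) * esymmMean m (k + 1) * pascal

variable [LinearOrder 𝕜] [IsStrictOrderedRing 𝕜]

theorem esymmMean_nonneg {m : Multiset 𝕜} (hm : ∀ a ∈ m, 0 ≤ a) (k : ℕ) : 0 ≤ esymmMean m k :=
  div_nonneg (esymm_nonneg hm k) (Nat.cast_nonneg _)

theorem esymmMean_succ_eq_zero {m : Multiset 𝕜} (hm : ∀ a ∈ m, 0 ≤ a) {k : ℕ}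
    (h : esymmMean m k = 0) : esymmMean m (k + 1) = 0 := by
  have hesymm : m.esymm k = 0 := by rw [← esymmMean_mul_choose, h, zero_mul]
  rw [esymmMean, esymm_succ_eq_zero hm hesymm, zero_div]

theorem esymmMean_newton {m : Multiset 𝕜} (hm : ∀ a ∈ m, 0 ≤ a) (k : ℕ) :
    esymmMean m k * esymmMean m (k + 2) ≤ esymmMean m (k + 1) ^ 2 := by
  induction m using Multiset.induction_on generalizing k with
  | empty =>
    rw [esymmMean_eq_zero_of_card_lt (k := k + 2) (by simp), mul_zero]
    exact sq_nonneg _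
  | cons a m ih =>
    obtain ⟨ha, hm⟩ := Multiset.forall_mem_cons.1 hm
    rcases lt_or_ge m.card (k + 1) with hk | hk
    · rw [esymmMean_eq_zero_of_card_lt (k := k + 2) (by simpa using hk), mul_zero]
      exact sq_nonneg _
    have hk' : (k : 𝕜) + 1 ≤ m.card := by exact_mod_cast hk
    have hcard : (0 : 𝕜) < (m.card : 𝕜) + 1 := by positivity
    refine le_of_mul_le_mul_left ?_ (pow_pos hcard 2)
    suffices (((m.card : 𝕜) + 1) * esymmMean (a ::ₘ m) k) *
        (((m.card : 𝕜) + 1) * esymmMean (a ::ₘ m) (k + 2)) ≤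
          (((m.card : 𝕜) + 1) * esymmMean (a ::ₘ m) (k + 1)) ^ 2 by
      linear_combination this
    cases k with
    | zero =>
      have hquad := newton_inequality_adjoin (a := 0) (b := 1) (c := esymmMean m 1)
        (i := 1) (j := (m.card : 𝕜)) ha le_rfl (by simpa using hk') (by simp)
        (by simpa [esymmMean_zero] using ih hm 0)
        (by simpa [esymmMean_zero] using esymmMean_nonneg hm 1)
      rw [card_add_one_mul_esymmMean_cons, card_add_one_mul_esymmMean_cons]
      simp only [esymmMean_zero] at hquad ⊢
      push_cast
      linear_combination hquad
    | succ k =>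
      have hquad := newton_inequality_adjoin (i := (k : 𝕜) + 2) (j := (m.card : 𝕜) - k - 1) ha
        (by linarith [(Nat.cast_nonneg k : (0 : 𝕜) ≤ k)]) (by push_cast at hk'; linarith)
        (ih hm k) (ih hm (k + 1))
        (mul_le_mul_of_mul_le_sq (esymmMean_nonneg hm _) (esymmMean_nonneg hm _)
          (esymmMean_nonneg hm _) (ih hm k) (ih hm (k + 1)) (esymmMean_succ_eq_zero hm)
          (esymmMean_succ_eq_zero hm))
      simp only [card_add_one_mul_esymmMean_cons]
      push_cast
      linear_combination hquad

theorem esymmMean_maclaurin {m : Multiset 𝕜} (hm : ∀ a ∈ m, 0 ≤ a) (k : ℕ) :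
    esymmMean m (k + 1) ^ k ≤ esymmMean m k ^ (k + 1) :=
  pow_le_pow_succ_of_mul_le_sq (esymmMean_nonneg hm) (esymmMean_zero m)
    (fun _ ↦ esymmMean_succ_eq_zero hm) (esymmMean_newton hm) k

end EsymmMean

section CliqueSum

variable {V : Type*} [Fintype V] [DecidableEq V] (G : SimpleGraph V) [DecidableRel G.Adj]

/-- The clique polynomial `f_s(G, x)` of a graph on an arbitrary finite vertex set, with values in
an arbitrary commutative semiring. -/
def cliqueSum {R : Type*} [CommSemiring R] (s : ℕ) (x : V → R) : R :=
  ∑ S ∈ G.cliqueFinset s, ∏ i ∈ S, x i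

/-- The partial derivative of `f_{s+1}(G, x)` with respect to `x_u`: the clique polynomial of
degree `s` of the link of `u`. -/
def linkSum {R : Type*} [CommSemiring R] (s : ℕ) (u : V) (x : V → R) : R :=
  ∑ S ∈ G.cliqueFinset (s + 1) with u ∈ S, ∏ i ∈ S.erase u, x i

variable {G}

theorem cliqueSum_zero {R : Type*} [CommSemiring R] (x : V → R) : cliqueSum G 0 x = 1 := by
  have hempty : G.cliqueFinset 0 = {∅} := by ext; simp
  simp [cliqueSum, hempty]

theorem cliqueSum_eq_esymm {R : Type*} [CommSemiring R] {x : V → R} {T : Finset V}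
    (hclique : G.IsClique (Function.support x)) (hT : Function.support x ⊆ T) (s : ℕ) :
    cliqueSum G s x = (T.val.map x).esymm s := by
  rw [Finset.esymm_map_val]
  refine sum_congr_of_eq_on_inter (fun S hS hST ↦ ?_) (fun S hST hS ↦ ?_) fun _ _ _ ↦ rfl
  · have hcard : #S = s := (G.mem_cliqueFinset_iff.1 hS).card_eq
    obtain ⟨i, hiS, hiT⟩ := not_subset.1 fun h ↦ hST (mem_powersetCard.2 ⟨h, hcard⟩)
    exact prod_eq_zero hiS (by_contra fun hi ↦ hiT (hT hi))
  · have hsupp : ¬ (S : Set V) ⊆ Function.support x := fun h ↦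
      hS (G.mem_cliqueFinset_iff.2 ⟨hclique.subset h, (mem_powersetCard.1 hST).2⟩)
    obtain ⟨i, hiS, hi⟩ := Set.not_subset.1 hsupp
    exact prod_eq_zero hiS (Function.notMem_support.1 hi)

theorem cliqueSum_update {R : Type*} [CommRing R] (s : ℕ) (u : V) (x : V → R) (t : R) :
    cliqueSum G (s + 1) (Function.update x u t) =
      cliqueSum G (s + 1) x + (t - x u) * linkSum G s u x := by
  rw [cliqueSum, cliqueSum, linkSum, sum_filter, mul_sum, ← sum_add_distrib]
  refine sum_congr rfl fun S _ ↦ ?_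
  split_ifs with hu
  · rw [prod_update_of_mem hu, ← mul_prod_erase S x hu, sdiff_singleton_eq_erase]
    ring
  · rw [prod_update_of_notMem hu, mul_zero, add_zero]

theorem linkSum_update_of_not_adj {R : Type*} [CommSemiring R] {u v : V} (h : ¬ G.Adj u v) (s : ℕ)
    (x : V → R) (t : R) : linkSum G s v (Function.update x u t) = linkSum G s v x := by
  refine sum_congr rfl fun S hS ↦ prod_update_of_notMem (fun hu ↦ h ?_) x t
  obtain ⟨hS, hv⟩ := mem_filter.1 hS
  exact (G.mem_cliqueFinset_iff.1 hS).isClique (mem_of_mem_erase hu) hv (ne_of_mem_erase hu)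

theorem cliqueSum_update_update {R : Type*} [CommRing R] {u v : V} (huv : u ≠ v)
    (h : ¬ G.Adj u v) (s : ℕ) (x : V → R) (a b : R) :
    cliqueSum G (s + 1) (Function.update (Function.update x u a) v b) =
      cliqueSum G (s + 1) x + (a - x u) * linkSum G s u x + (b - x v) * linkSum G s v x := by
  rw [cliqueSum_update, cliqueSum_update, linkSum_update_of_not_adj h,
    Function.update_of_ne huv.symm]

section Ordered

variable {R : Type*} [CommRing R] [LinearOrder R] [IsStrictOrderedRing R] {x : V → R}

theorem cliqueSum_nonneg (hx : 0 ≤ x) (s : ℕ) : 0 ≤ cliqueSum G s x :=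
  sum_nonneg fun _ _ ↦ prod_nonneg fun i _ ↦ hx i

theorem linkSum_nonneg (hx : 0 ≤ x) (s : ℕ) (u : V) : 0 ≤ linkSum G s u x :=
  sum_nonneg fun _ _ ↦ prod_nonneg fun i _ ↦ hx i

theorem linkSum_succ_eq_zero (hx : 0 ≤ x) {s : ℕ} {u : V} (h : linkSum G s u x = 0) :
    linkSum G (s + 1) u x = 0 := by
  rw [linkSum, sum_eq_zero_iff_of_nonneg fun _ _ ↦ prod_nonneg fun i _ ↦ hx i] at h
  refine sum_eq_zero fun S hS ↦ ?_
  obtain ⟨hS, hu⟩ := mem_filter.1 hS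
  have hclique := G.mem_cliqueFinset_iff.1 hS
  obtain ⟨w, hw⟩ : (S.erase u).Nonempty := by
    rw [← card_pos, card_erase_of_mem hu, hclique.card_eq]
    omega
  have hsub := h (S.erase w) (mem_filter.2
    ⟨G.mem_cliqueFinset_iff.2 (hclique.erase_of_mem (mem_of_mem_erase hw)),
      mem_erase.2 ⟨(ne_of_mem_erase hw).symm, hu⟩⟩)
  rw [← mul_prod_erase _ _ hw, erase_right_comm, hsub, mul_zero]

end Ordered

variable {𝕜 : Type*} [Field 𝕜] [LinearOrder 𝕜] [IsStrictOrderedRing 𝕜] {x : V → 𝕜}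

theorem exists_support_ssubset_of_linkSum_mul_le {u v : V} (huv : u ≠ v) (hadj : ¬ G.Adj u v)
    (hx : 0 ≤ x) (hu : x u ≠ 0) (hv : x v ≠ 0) {s : ℕ}
    (hle : linkSum G s u x * linkSum G (s + 1) v x ≤ linkSum G s v x * linkSum G (s + 1) u x) :
    ∃ y, 0 ≤ y ∧ Function.support y ⊂ Function.support x ∧
      cliqueSum G (s + 1) y = cliqueSum G (s + 1) x ∧
      cliqueSum G (s + 2) x ≤ cliqueSum G (s + 2) y := by
  rcases (linkSum_nonneg (G := G) hx s u).eq_or_lt with hB | hB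
  · refine ⟨Function.update x u 0, le_update_iff.2 ⟨le_rfl, fun i _ ↦ hx i⟩, ?_, ?_, ?_⟩
    · rw [Function.support_update_zero]
      exact Set.sdiff_singleton_ssubset.2 hu
    · rw [cliqueSum_update, ← hB, mul_zero, add_zero]
    · rw [cliqueSum_update, linkSum_succ_eq_zero hx hB.symm, mul_zero, add_zero]
  -- In `f_{s+1}`, raising `x u` by `t * linkSum G s v x` compensates for lowering `x v` to `0`.
  obtain ⟨t, ht, hxv⟩ : ∃ t, 0 ≤ t ∧ x v = t * linkSum G s u x :=
    ⟨x v / linkSum G s u x, div_nonneg (hx v) hB.le, (div_mul_cancel₀ _ hB.ne').symm⟩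
  have hpos : 0 < x u + t * linkSum G s v x :=
    add_pos_of_pos_of_nonneg ((hx u).lt_of_ne' hu) (mul_nonneg ht (linkSum_nonneg hx s v))
  have hupdate : 0 ≤ Function.update x u (x u + t * linkSum G s v x) :=
    le_update_iff.2 ⟨hpos.le, fun i _ ↦ hx i⟩
  refine ⟨Function.update (Function.update x u (x u + t * linkSum G s v x)) v 0,
    le_update_iff.2 ⟨le_rfl, fun i _ ↦ hupdate i⟩, ?_, ?_, ?_⟩
  · rw [Function.support_update_zero, Function.support_update_of_ne_zero _ _ hpos.ne',
      Set.insert_eq_of_mem hu]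
    exact Set.sdiff_singleton_ssubset.2 hv
  · rw [cliqueSum_update_update huv hadj, hxv]
    ring
  · rw [cliqueSum_update_update huv hadj, hxv]
    linear_combination t * hle

theorem exists_support_ssubset_of_not_isClique (hx : 0 ≤ x)
    (hclique : ¬ G.IsClique (Function.support x)) (s : ℕ) :
    ∃ y, 0 ≤ y ∧ Function.support y ⊂ Function.support x ∧
      cliqueSum G (s + 1) y = cliqueSum G (s + 1) x ∧
      cliqueSum G (s + 2) x ≤ cliqueSum G (s + 2) y := by
  simp only [SimpleGraph.isClique_iff, Set.Pairwise, not_forall] at hclique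
  obtain ⟨u, hu, v, hv, huv, hadj⟩ := hclique
  rcases le_total (linkSum G s u x * linkSum G (s + 1) v x)
    (linkSum G s v x * linkSum G (s + 1) u x) with hle | hle
  · exact exists_support_ssubset_of_linkSum_mul_le huv hadj hx hu hv hle
  · exact exists_support_ssubset_of_linkSum_mul_le huv.symm (fun h ↦ hadj h.symm) hx hv hu hle

theorem exists_isClique_support (hx : 0 ≤ x) (s : ℕ) :
    ∃ y, 0 ≤ y ∧ G.IsClique (Function.support y) ∧
      cliqueSum G (s + 1) y = cliqueSum G (s + 1) x ∧
      cliqueSum G (s + 2) x ≤ cliqueSum G (s + 2) y := by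
  induction hS : Function.support x using WellFoundedLT.induction generalizing x with
  | _ S ih =>
    subst hS
    by_cases hclique : G.IsClique (Function.support x)
    · exact ⟨x, hx, hclique, rfl, le_rfl⟩
    obtain ⟨y, hy, hlt, hyeq, hyle⟩ := exists_support_ssubset_of_not_isClique hx hclique s
    obtain ⟨z, hz, hzclique, hzeq, hzle⟩ := ih _ hlt hy rfl
    exact ⟨z, hz, hzclique, hzeq.trans hyeq, hyle.trans hzle⟩

theorem exists_multiset_cliqueSum_le_esymm (hx : 0 ≤ x) (s : ℕ) :
    ∃ m : Multiset 𝕜, m.card = G.cliqueNum ∧ (∀ a ∈ m, 0 ≤ a) ∧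
      cliqueSum G (s + 1) x = m.esymm (s + 1) ∧ cliqueSum G (s + 2) x ≤ m.esymm (s + 2) := by
  obtain ⟨y, hy, hclique, heq, hle⟩ := exists_isClique_support (G := G) hx s
  have hcard : #{i | y i ≠ 0} ≤ G.cliqueNum :=
    SimpleGraph.IsClique.card_le_cliqueNum (tc := by simpa [Function.support] using hclique)
  obtain ⟨C, hC⟩ := G.exists_isNClique_cliqueNum
  obtain ⟨T, hsupp, hT⟩ := exists_superset_card_eq hcard (hC.card_eq ▸ card_le_univ C)
  have hesymm := cliqueSum_eq_esymm hclique fun i hi ↦ hsupp (by simpa using hi)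
  exact ⟨T.val.map y, by simpa using hT, by simpa using fun i _ ↦ hy i, heq ▸ hesymm _,
    hesymm (s + 2) ▸ hle⟩

theorem maclaurin_extension_general (hx : 0 ≤ x) {s : ℕ} (_hs : s < G.cliqueNum) :
    (cliqueSum G (s + 1) x / (G.cliqueNum.choose (s + 1) : 𝕜)) ^ s ≤
      (cliqueSum G s x / (G.cliqueNum.choose s : 𝕜)) ^ (s + 1) := by
  cases s with
  | zero => simp [cliqueSum_zero]
  | succ s =>
    obtain ⟨m, hcard, hm, heq, hle⟩ := exists_multiset_cliqueSum_le_esymm (G := G) hx s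
    rw [heq, ← hcard]
    refine le_trans ?_ (esymmMean_maclaurin hm (s + 1))
    exact pow_le_pow_left₀ (div_nonneg (cliqueSum_nonneg hx _) (Nat.cast_nonneg _))
      (div_le_div_of_nonneg_right hle (Nat.cast_nonneg _)) _

end CliqueSum

/-- Extension of Maclaurin's inequality: for a graph `G` with clique number `ω`,
nonnegative `x`, and `1 ≤ s < ω`, one has
`ρ_{s+1}(G,x)^{1/(s+1)} ≤ ρ_s(G,x)^{1/s}` where `ρ_s = f_s / C(ω,s)`. -/
theorem maclaurin_extension {n : ℕ} (G : SimpleGraph (Fin n)) [DecidableRel G.Adj]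
    (x : Fin n → ℝ) (hx : ∀ i, 0 ≤ x i) (s : ℕ) (hs : 1 ≤ s) (hsw : s < G.cliqueNum) :
    (fClique G (s + 1) x / (G.cliqueNum.choose (s + 1) : ℝ)) ^ ((1 : ℝ) / ((s : ℝ) + 1))
      ≤ (fClique G s x / (G.cliqueNum.choose s : ℝ)) ^ ((1 : ℝ) / (s : ℝ)) := by
  have hnonneg (k : ℕ) : 0 ≤ fClique G k x / (G.cliqueNum.choose k : ℝ) :=
    div_nonneg (cliqueSum_nonneg hx k) (Nat.cast_nonneg _)
  exact_mod_cast rpow_one_div_le_rpow_one_div_of_pow_le_pow (hnonneg _) (hnonneg _)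
    (Nat.one_le_iff_ne_zero.1 hs) s.succ_ne_zero (maclaurin_extension_general hx hsw)
end

section
/- Let G be a simple graph on vertex set [n] with clique number ω ≥ 2. Then for every x = (x_1,...,x_n) ∈ ℝ^n with x ≥ 0, one has Σ_{{i,j} ∈ E(G)} x_i x_j ≤ (1 - 1/ω)·(x_1 + ··· + x_n)^2 / 2; equivalently ρ_1(G,x)^2 ≥ ρ_2(G,x). -/
open Finset

/-!
Moving the whole weight of a vertex `v` to a non-neighbour `u` changes the quadratic form `xᵀ A x`
of the adjacency matrix linearly, because `A u v = 0`; hence moving it to the vertex with the larger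
value of `A x` does not decrease the form. Repeating this makes the support of `x` a clique. On such
an `x` the form equals `(∑ xᵢ)² - ∑ xᵢ²`, and Cauchy–Schwarz over the at most `ω` vertices of the
support gives `∑ xᵢ² ≥ (∑ xᵢ)² / ω`.
-/

open Function Matrix

section EdgeSum

variable {V K : Type*} [DecidableEq V] {G : SimpleGraph V}

lemma isNClique_two_pair_iff {a b : V} : G.IsNClique 2 {a, b} ↔ G.Adj a b := by
  rw [SimpleGraph.isNClique_iff, coe_pair, SimpleGraph.isClique_pair]
  refine ⟨fun ⟨h, hcard⟩ => h ?_, fun h => ⟨fun _ => h, card_pair h.ne⟩⟩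
  rintro rfl
  simp at hcard

lemma isNClique_two_iff {s : Finset V} : G.IsNClique 2 s ↔ ∃ a b, G.Adj a b ∧ s = {a, b} := by
  constructor
  · intro hs
    obtain ⟨a, b, -, rfl⟩ := card_eq_two.1 hs.card_eq
    exact ⟨a, b, isNClique_two_pair_iff.1 hs, rfl⟩
  · rintro ⟨a, b, h, rfl⟩
    exact isNClique_two_pair_iff.2 h

variable [Fintype V] [DecidableRel G.Adj] [CommSemiring K]

lemma filter_adj_pair_eq {a b : V} (h : G.Adj a b) :
    ({p | G.Adj p.1 p.2 ∧ ({p.1, p.2} : Finset V) = {a, b}} : Finset (V × V)) =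
      {(a, b), (b, a)} := by
  ext ⟨i, j⟩
  simp only [mem_filter_univ, mem_insert, mem_singleton, Prod.mk.injEq, ← coe_inj, coe_pair,
    Set.pair_eq_pair_iff]
  grind [G.adj_comm]

variable (G) in
lemma dotProduct_adjMatrix_mulVec_self (x : V → K) :
    x ⬝ᵥ G.adjMatrix K *ᵥ x = 2 * ∑ S ∈ G.cliqueFinset 2, ∏ i ∈ S, x i := by
  have maps_to : ∀ p ∈ ({p | G.Adj p.1 p.2} : Finset (V × V)),
      ({p.1, p.2} : Finset V) ∈ G.cliqueFinset 2 := by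
    simp [SimpleGraph.mem_cliqueFinset_iff, isNClique_two_pair_iff]
  calc x ⬝ᵥ G.adjMatrix K *ᵥ x
      = ∑ p : V × V with G.Adj p.1 p.2, x p.1 * x p.2 := by
        rw [SimpleGraph.dotProduct_mulVec_adjMatrix, sum_filter, Fintype.sum_prod_type]
    _ = ∑ S ∈ G.cliqueFinset 2,
          ∑ p : V × V with G.Adj p.1 p.2 ∧ ({p.1, p.2} : Finset V) = S, x p.1 * x p.2 := by
        simp only [← sum_fiberwise_of_maps_to maps_to, filter_filter]
    _ = ∑ S ∈ G.cliqueFinset 2, 2 * ∏ i ∈ S, x i := by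
        refine sum_congr rfl fun S hS => ?_
        obtain ⟨a, b, h, rfl⟩ := isNClique_two_iff.1 (G.mem_cliqueFinset_iff.1 hS)
        rw [filter_adj_pair_eq h, sum_pair (by simp [h.ne]), prod_pair h.ne]
        ring
    _ = 2 * ∑ S ∈ G.cliqueFinset 2, ∏ i ∈ S, x i := (mul_sum _ _ _).symm

end EdgeSum

lemma add_dotProduct_mulVec_add_of_isSymm {V K : Type*} [Fintype V] [CommSemiring K]
    {A : Matrix V V K} (hA : A.IsSymm) (x d : V → K) :
    (x + d) ⬝ᵥ A *ᵥ (x + d) = x ⬝ᵥ A *ᵥ x + 2 * (d ⬝ᵥ A *ᵥ x) + d ⬝ᵥ A *ᵥ d := by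
  have hsymm : x ⬝ᵥ A *ᵥ d = d ⬝ᵥ A *ᵥ x := by
    rw [dotProduct_mulVec, ← mulVec_transpose, hA.eq, dotProduct_comm]
  rw [mulVec_add, dotProduct_add, add_dotProduct, add_dotProduct, hsymm]
  ring

section WeightShift

variable {V K : Type*} [DecidableEq V]

/-- The Motzkin–Straus weight shift: the vertex `v` hands its whole weight over to `u`. It is
written as a perturbation of `x`, so that quadratic forms of it can be expanded. -/
def weightShift [AddCommGroup K] (x : V → K) (u v : V) : V → K :=
  x + (Pi.single u (x v) - Pi.single v (x v))

lemma sum_weightShift [Fintype V] [AddCommGroup K] (x : V → K) (u v : V) :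
    ∑ i, weightShift x u v i = ∑ i, x i := by
  simp [weightShift, sum_add_distrib]

lemma weightShift_nonneg [AddCommGroup K] [PartialOrder K] [IsOrderedAddMonoid K] {x : V → K}
    (hx : 0 ≤ x) (u v : V) : 0 ≤ weightShift x u v := by
  have h_single : (Pi.single v (x v) : V → K) ≤ x := by
    intro i
    obtain rfl | hi := eq_or_ne i v
    · simp
    · simpa [hi] using hx i
  have : 0 ≤ (Pi.single u (x v) : V → K) := Pi.single_nonneg.2 (hx v)
  rw [weightShift, add_sub_left_comm]
  exact add_nonneg this (sub_nonneg.2 h_single)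

lemma support_weightShift_ssubset [AddCommGroup K] {x : V → K} {u v : V} (huv : u ≠ v)
    (hu : x u ≠ 0) (hv : x v ≠ 0) : support (weightShift x u v) ⊂ support x := by
  refine Set.ssubset_iff_of_subset ?_ |>.2 ⟨v, hv, by simp [weightShift, huv.symm]⟩
  intro i hi
  obtain rfl | hiu := eq_or_ne i u
  · exact hu
  obtain rfl | hiv := eq_or_ne i v
  · exact hv
  simpa [weightShift, hiu, hiv] using hi

variable [Fintype V] (G : SimpleGraph V) [DecidableRel G.Adj]

lemma weightShift_dotProduct_adjMatrix_mulVec [CommRing K] {u v : V} (huv : ¬ G.Adj u v)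
    (x : V → K) :
    weightShift x u v ⬝ᵥ G.adjMatrix K *ᵥ weightShift x u v =
      x ⬝ᵥ G.adjMatrix K *ᵥ x +
        2 * (x v * ((G.adjMatrix K *ᵥ x) u - (G.adjMatrix K *ᵥ x) v)) := by
  set d : V → K := Pi.single u (x v) - Pi.single v (x v) with hd
  have d_linear : d ⬝ᵥ G.adjMatrix K *ᵥ x =
      x v * ((G.adjMatrix K *ᵥ x) u - (G.adjMatrix K *ᵥ x) v) := by
    rw [hd, sub_dotProduct, single_dotProduct, single_dotProduct, mul_sub]
  have d_quadratic : d ⬝ᵥ G.adjMatrix K *ᵥ d = 0 := by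
    rw [hd, sub_dotProduct, single_dotProduct, single_dotProduct, mulVec_sub]
    simp [mulVec_single, huv, mt SimpleGraph.Adj.symm huv]
  rw [weightShift, add_dotProduct_mulVec_add_of_isSymm G.isSymm_adjMatrix, d_linear,
    d_quadratic, add_zero]

end WeightShift

section CliqueReduction

variable {V K : Type*} [Fintype V] (G : SimpleGraph V) [DecidableRel G.Adj] [CommRing K]
  [LinearOrder K] [IsOrderedRing K]

lemma exists_support_ssubset_of_not_isClique_s2 {x : V → K} (hx : 0 ≤ x)
    (hclique : ¬ G.IsClique (support x)) :
    ∃ y : V → K, support y ⊂ support x ∧ 0 ≤ y ∧ ∑ i, y i = ∑ i, x i ∧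
      x ⬝ᵥ G.adjMatrix K *ᵥ x ≤ y ⬝ᵥ G.adjMatrix K *ᵥ y := by
  classical
  obtain ⟨⟨u, hu⟩, ⟨v, hv⟩, huv, hadj⟩ := G.not_isClique_iff.1 hclique
  rw [Ne, Subtype.mk.injEq] at huv
  wlog hle : (G.adjMatrix K *ᵥ x) v ≤ (G.adjMatrix K *ᵥ x) u generalizing u v
  · exact this v hv u hu (Ne.symm huv) (mt SimpleGraph.Adj.symm hadj) (le_of_not_ge hle)
  refine ⟨weightShift x u v, support_weightShift_ssubset huv hu hv, weightShift_nonneg hx u v,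
    sum_weightShift x u v, ?_⟩
  rw [weightShift_dotProduct_adjMatrix_mulVec G hadj]
  exact le_add_of_nonneg_right (mul_nonneg zero_le_two (mul_nonneg (hx v) (sub_nonneg.2 hle)))

lemma exists_isClique_support_s2 {x : V → K} (hx : 0 ≤ x) :
    ∃ y : V → K, G.IsClique (support y) ∧ ∑ i, y i = ∑ i, x i ∧
      x ⬝ᵥ G.adjMatrix K *ᵥ x ≤ y ⬝ᵥ G.adjMatrix K *ᵥ y := by
  induction hs : support x using WellFoundedLT.induction generalizing x with
  | ind s ih =>
    subst hs
    by_cases hclique : G.IsClique (support x)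
    · exact ⟨x, hclique, rfl, le_rfl⟩
    obtain ⟨y, hyx, hy, y_sum, y_form⟩ := exists_support_ssubset_of_not_isClique_s2 G hx hclique
    obtain ⟨z, z_clique, z_sum, z_form⟩ := ih _ hyx hy rfl
    exact ⟨z, z_clique, z_sum.trans y_sum, y_form.trans z_form⟩

end CliqueReduction

section CliqueSupport

variable {V K : Type*} [Fintype V] {G : SimpleGraph V}

lemma dotProduct_adjMatrix_mulVec_self_of_isClique_support [DecidableRel G.Adj] [CommRing K]
    {x : V → K} (hx : G.IsClique (support x)) :
    x ⬝ᵥ G.adjMatrix K *ᵥ x = (∑ i, x i) ^ 2 - ∑ i, x i ^ 2 := by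
  classical
  have entry (i j : V) :
      (if G.Adj i j then x i * x j else 0) = x i * x j - if i = j then x i * x j else 0 := by
    obtain rfl | hij := eq_or_ne i j
    · simp
    by_cases hadj : G.Adj i j
    · simp [hadj, hij]
    · have : x i * x j = 0 := by
        by_contra h
        exact hadj (hx (left_ne_zero_of_mul h) (right_ne_zero_of_mul h) hij)
      simp [hadj, this]
  simp only [SimpleGraph.dotProduct_mulVec_adjMatrix, entry, sum_sub_distrib, sum_ite_eq, mem_univ,
    if_true, sq, sum_mul_sum]

lemma sq_sum_le_cliqueNum_mul_sum_sq [CommRing K] [LinearOrder K] [IsStrictOrderedRing K]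
    {x : V → K} (hx : G.IsClique (support x)) :
    (∑ i, x i) ^ 2 ≤ G.cliqueNum * ∑ i, x i ^ 2 := by
  have card_le : #{i | x i ≠ 0} ≤ G.cliqueNum :=
    SimpleGraph.IsClique.card_le_cliqueNum (tc := by simpa [support] using hx)
  calc (∑ i, x i) ^ 2
      = (∑ i with x i ≠ 0, x i) ^ 2 := by rw [sum_filter_ne_zero]
    _ ≤ #{i | x i ≠ 0} * ∑ i with x i ≠ 0, x i ^ 2 := sq_sum_le_card_mul_sum_sq
    _ ≤ G.cliqueNum * ∑ i, x i ^ 2 := by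
        gcongr
        exact filter_subset _ _

end CliqueSupport

theorem motzkin_straus_ineq_general {V K : Type*} [Fintype V] [DecidableEq V] [Field K]
    [LinearOrder K] [IsStrictOrderedRing K] (G : SimpleGraph V) [DecidableRel G.Adj]
    (hω : 0 < G.cliqueNum) {x : V → K} (hx : 0 ≤ x) :
    ∑ S ∈ G.cliqueFinset 2, ∏ i ∈ S, x i
      ≤ (1 - 1 / (G.cliqueNum : K)) * (∑ i, x i) ^ 2 / 2 := by
  obtain ⟨y, y_clique, y_sum, y_form⟩ := exists_isClique_support_s2 G hx
  have sum_sq_ge : (∑ i, y i) ^ 2 / G.cliqueNum ≤ ∑ i, y i ^ 2 :=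
    (div_le_iff₀' (Nat.cast_pos.2 hω)).2 (sq_sum_le_cliqueNum_mul_sum_sq y_clique)
  rw [le_div_iff₀' two_pos]
  calc 2 * ∑ S ∈ G.cliqueFinset 2, ∏ i ∈ S, x i
      = x ⬝ᵥ G.adjMatrix K *ᵥ x := (dotProduct_adjMatrix_mulVec_self G x).symm
    _ ≤ y ⬝ᵥ G.adjMatrix K *ᵥ y := y_form
    _ = (∑ i, y i) ^ 2 - ∑ i, y i ^ 2 :=
        dotProduct_adjMatrix_mulVec_self_of_isClique_support y_clique
    _ ≤ (∑ i, y i) ^ 2 - (∑ i, y i) ^ 2 / G.cliqueNum := sub_le_sub_left sum_sq_ge _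
    _ = (1 - 1 / (G.cliqueNum : K)) * (∑ i, x i) ^ 2 := by rw [y_sum]; ring

/-- Motzkin–Straus-type inequality: if `G` has clique number `ω ≥ 2` and `x ≥ 0`, then
`Σ_{{i,j} ∈ E(G)} x_i x_j ≤ (1 - 1/ω)·(x_1 + ⋯ + x_n)^2 / 2`.
The edge sum is written as the sum over `2`-cliques of the product of the coordinates. -/
theorem motzkin_straus_ineq {n : ℕ} (G : SimpleGraph (Fin n)) [DecidableRel G.Adj]
    (hw : 2 ≤ G.cliqueNum) (x : Fin n → ℝ) (hx : ∀ i, 0 ≤ x i) :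
    ∑ S ∈ G.cliqueFinset 2, ∏ i ∈ S, x i
      ≤ (1 - 1 / (G.cliqueNum : ℝ)) * (∑ i, x i) ^ 2 / 2 :=
  motzkin_straus_ineq_general G (zero_lt_two.trans_le hw) hx
end

section
/- Let G be a noncomplete simple graph on vertex set [n], let s be an integer with 1 ≤ s < ω(G), and assume every vertex of G is contained in some s-clique. Suppose f_{s+1}(G,·) attains its maximum on S_s(G) at some point y with all coordinates strictly positive. Then for any two nonadjacent vertices u and v of G, there exists z = (z_1,...,z_n) ∈ S_s(G) such that f_{s+1}(G,z) = f_{s+1}(G,y) and z_u = 0. -/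
open Finset

/-! No clique contains both of the nonadjacent vertices `u` and `v`, so neither clique polynomial
has a term divisible by `x_u x_v`, and both are affine along every line in the `(u, v)`-coordinate
plane through `y`. Moving weight from `u` to `v` at exchange rate `∂_u f_s(y) / ∂_v f_s(y)` keeps
`f_s` constant. Since `y_v > 0`, a little weight can also be moved back from `v` to `u`, so
maximality forces the slope of `f_{s+1}` along this line to be nonnegative; the weight on `u` can
then be exhausted, and maximality again prevents `f_{s+1}` from changing. -/

section HypergraphPoly

variable {V R : Type*}

/-- The edge polynomial `Σ_{S ∈ 𝓐} Π_{i ∈ S} x i` of a finite hypergraph, given by its family `𝓐`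
of edges. Its partial derivative at a vertex `a` is the edge polynomial of the link
`𝓐.memberSubfamily a`. -/
def hypergraphPoly [CommSemiring R] (𝓐 : Finset (Finset V)) (x : V → R) : R :=
  ∑ S ∈ 𝓐, ∏ i ∈ S, x i

theorem hypergraphPoly_nonneg [CommSemiring R] [PartialOrder R] [IsOrderedRing R]
    (𝓐 : Finset (Finset V)) {x : V → R} (hx : ∀ i, 0 ≤ x i) : 0 ≤ hypergraphPoly 𝓐 x :=
  sum_nonneg fun _ _ => prod_nonneg fun i _ => hx i

variable [DecidableEq V]

theorem hypergraphPoly_memberSubfamily [CommSemiring R] (𝓐 : Finset (Finset V)) (x : V → R)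
    (a : V) :
    hypergraphPoly (𝓐.memberSubfamily a) x = ∑ S ∈ 𝓐 with a ∈ S, ∏ i ∈ S.erase a, x i :=
  sum_image <| (erase_injOn' a).mono fun _ hS => (mem_filter.1 hS).2

theorem hypergraphPoly_memberSubfamily_pos [CommSemiring R] [PartialOrder R]
    [IsStrictOrderedRing R] {𝓐 : Finset (Finset V)} {x : V → R} (hx : ∀ i, 0 ≤ x i)
    {a : V} {S : Finset V} (hS : S ∈ 𝓐) (ha : a ∈ S) (hxS : ∀ i ∈ S, 0 < x i) :
    0 < hypergraphPoly (𝓐.memberSubfamily a) x := by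
  rw [hypergraphPoly_memberSubfamily]
  exact sum_pos' (fun _ _ => prod_nonneg fun i _ => hx i)
    ⟨S, mem_filter.2 ⟨hS, ha⟩, prod_pos fun i hi => hxS i (mem_of_mem_erase hi)⟩

theorem hypergraphPoly_eq_nonMemberSubfamily_add [CommSemiring R] (𝓐 : Finset (Finset V))
    (x : V → R) (a : V) :
    hypergraphPoly 𝓐 x =
      hypergraphPoly (𝓐.nonMemberSubfamily a) x +
        x a * hypergraphPoly (𝓐.memberSubfamily a) x := by
  rw [hypergraphPoly_memberSubfamily, mul_sum, add_comm, hypergraphPoly,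
    ← sum_filter_add_sum_filter_not 𝓐 (a ∈ ·)]
  congr 1
  exact sum_congr rfl fun S hS => (mul_prod_erase S x (mem_filter.1 hS).2).symm

theorem hypergraphPoly_update_of_forall_notMem [CommSemiring R] {𝓐 : Finset (Finset V)} {a : V}
    (ha : ∀ S ∈ 𝓐, a ∉ S) (x : V → R) (c : R) :
    hypergraphPoly 𝓐 (Function.update x a c) = hypergraphPoly 𝓐 x :=
  sum_congr rfl fun S hS => prod_update_of_notMem (ha S hS) x c

theorem hypergraphPoly_update [CommRing R] (𝓐 : Finset (Finset V)) (x : V → R) (a : V) (c : R) :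
    hypergraphPoly 𝓐 (Function.update x a c) =
      hypergraphPoly 𝓐 x + (c - x a) * hypergraphPoly (𝓐.memberSubfamily a) x := by
  rw [hypergraphPoly_eq_nonMemberSubfamily_add 𝓐 (Function.update x a c) a,
    hypergraphPoly_eq_nonMemberSubfamily_add 𝓐 x a,
    hypergraphPoly_update_of_forall_notMem fun _ hS => (mem_nonMemberSubfamily.1 hS).2,
    hypergraphPoly_update_of_forall_notMem fun _ hS => (mem_memberSubfamily.1 hS).2,
    Function.update_self]
  ring

end HypergraphPoly

section TransferWeight

variable {V R : Type*} [DecidableEq V]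

/-- The weighting obtained from `x` by taking weight `t` off `u` and putting weight `r * t` on `v`;
the exchange rate `r` will be chosen to keep a given edge polynomial constant. -/
def transferWeight [Ring R] (x : V → R) (u v : V) (r t : R) : V → R :=
  Function.update (Function.update x u (x u - t)) v (x v + r * t)

theorem transferWeight_apply_left [Ring R] (x : V → R) {u v : V} (huv : u ≠ v) (r t : R) :
    transferWeight x u v r t u = x u - t := by
  simp [transferWeight, huv]

theorem transferWeight_nonneg [Ring R] [PartialOrder R] [IsOrderedAddMonoid R] {x : V → R}
    (hx : ∀ i, 0 ≤ x i) {u v : V} {r t : R} (hu : t ≤ x u) (hv : 0 ≤ x v + r * t) (i : V) :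
    0 ≤ transferWeight x u v r t i := by
  have hux : (0 : V → R) ≤ Function.update x u (x u - t) :=
    le_update_iff.2 ⟨sub_nonneg.2 hu, fun i _ => hx i⟩
  exact (le_update_iff.2 ⟨hv, fun i _ => hux i⟩ : (0 : V → R) ≤ transferWeight x u v r t) i

theorem hypergraphPoly_transferWeight [CommRing R] {𝓐 : Finset (Finset V)} {u v : V}
    (huv : u ≠ v) (h𝓐 : ∀ S ∈ 𝓐, u ∈ S → v ∉ S) (x : V → R) (r t : R) :
    hypergraphPoly 𝓐 (transferWeight x u v r t) =
      hypergraphPoly 𝓐 x +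
        t * (r * hypergraphPoly (𝓐.memberSubfamily v) x -
          hypergraphPoly (𝓐.memberSubfamily u) x) := by
  have h_link : ∀ S ∈ 𝓐.memberSubfamily v, u ∉ S := fun S hS hu =>
    h𝓐 _ (mem_memberSubfamily.1 hS).1 (mem_insert_of_mem hu) (mem_insert_self v S)
  rw [transferWeight, hypergraphPoly_update, hypergraphPoly_update_of_forall_notMem h_link,
    hypergraphPoly_update, Function.update_of_ne huv.symm]
  ring

end TransferWeight

theorem zero_coordinate_max_general {V 𝕜 : Type*} [Field 𝕜] [LinearOrder 𝕜]
    [IsStrictOrderedRing 𝕜] {𝓐 𝓑 : Finset (Finset V)} {u v : V}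
    (h𝓐 : ∀ S ∈ 𝓐, u ∈ S → v ∉ S) (h𝓑 : ∀ S ∈ 𝓑, u ∈ S → v ∉ S)
    {y : V → 𝕜} (hy : ∀ i, 0 ≤ y i) (hcov : ∃ S ∈ 𝓐, v ∈ S ∧ ∀ i ∈ S, 0 < y i)
    {c : 𝕜} (hyc : hypergraphPoly 𝓐 y = c)
    (hmax : ∀ x : V → 𝕜, (∀ i, 0 ≤ x i) → hypergraphPoly 𝓐 x = c →
      hypergraphPoly 𝓑 x ≤ hypergraphPoly 𝓑 y) :
    ∃ z : V → 𝕜, (∀ i, 0 ≤ z i) ∧ hypergraphPoly 𝓐 z = c ∧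
      hypergraphPoly 𝓑 z = hypergraphPoly 𝓑 y ∧ z u = 0 := by
  classical
  obtain ⟨S, hS, hvS, hyS⟩ := hcov
  have huv : u ≠ v := fun h => h𝓐 S hS (h ▸ hvS) hvS
  have hAv : 0 < hypergraphPoly (𝓐.memberSubfamily v) y :=
    hypergraphPoly_memberSubfamily_pos hy hS hvS hyS
  set r := hypergraphPoly (𝓐.memberSubfamily u) y / hypergraphPoly (𝓐.memberSubfamily v) y with hr
  have hr_nonneg : 0 ≤ r := div_nonneg (hypergraphPoly_nonneg _ hy) hAv.le
  have h𝓐_const (t : 𝕜) : hypergraphPoly 𝓐 (transferWeight y u v r t) = c := by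
    rw [hypergraphPoly_transferWeight huv h𝓐, hr, div_mul_cancel₀ _ hAv.ne', sub_self, mul_zero,
      add_zero, hyc]
  obtain ⟨m, h𝓑_affine⟩ : ∃ m, ∀ t, hypergraphPoly 𝓑 (transferWeight y u v r t) =
      hypergraphPoly 𝓑 y + t * m := ⟨_, hypergraphPoly_transferWeight huv h𝓑 y r⟩
  have h_slope (t : 𝕜) (hu : t ≤ y u) (hv : 0 ≤ y v + r * t) : t * m ≤ 0 := by
    simpa [h𝓑_affine] using hmax _ (transferWeight_nonneg hy hu hv) (h𝓐_const t)
  have hv_full : 0 ≤ y v + r * y u := add_nonneg (hy v) (mul_nonneg hr_nonneg (hy u))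
  have hm : 0 ≤ m := by
    obtain ⟨ε, hε, hrε⟩ := exists_pos_mul_lt (hyS v hvS) r
    have h := h_slope (-ε) (by linarith [hy u]) (by linarith)
    exact nonneg_of_mul_nonneg_right (by linarith) hε
  have h_zero : y u * m = 0 := le_antisymm (h_slope _ le_rfl hv_full) (mul_nonneg (hy u) hm)
  exact ⟨transferWeight y u v r (y u), transferWeight_nonneg hy le_rfl hv_full, h𝓐_const _,
    by rw [h𝓑_affine, h_zero, add_zero], by rw [transferWeight_apply_left y huv, sub_self]⟩

theorem notMem_of_mem_cliqueFinset_of_not_adj {V : Type*} [Fintype V] [DecidableEq V]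
    {G : SimpleGraph V} [DecidableRel G.Adj] {u v : V} (huv : u ≠ v) (hadj : ¬ G.Adj u v) {s : ℕ}
    (S : Finset V) (hS : S ∈ G.cliqueFinset s) (hu : u ∈ S) : v ∉ S :=
  fun hv => hadj ((SimpleGraph.mem_cliqueFinset_iff.1 hS).isClique hu hv huv)

/-- Lemma 2: if `G` is noncomplete, `1 ≤ s < ω(G)`, every vertex lies in some `s`-clique,
and `f_{s+1}(G,·)` attains its maximum on `S_s(G)` at a strictly positive point `y`, then
for any nonadjacent vertices `u, v` there is `z ∈ S_s(G)` with
`f_{s+1}(G,z) = f_{s+1}(G,y)` and `z_u = 0`. -/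
theorem zero_coordinate_max {n : ℕ} (G : SimpleGraph (Fin n)) [DecidableRel G.Adj]
    (hnc : G ≠ ⊤) (s : ℕ) (hs : 1 ≤ s) (hsw : s < G.cliqueNum)
    (hcov : ∀ v : Fin n, ∃ S ∈ G.cliqueFinset s, v ∈ S)
    (y : Fin n → ℝ) (hy : ∀ i, 0 < y i) (hy1 : fClique G s y = 1)
    (hmax : ∀ x : Fin n → ℝ, (∀ i, 0 ≤ x i) → fClique G s x = 1 →
      fClique G (s + 1) x ≤ fClique G (s + 1) y)
    (u v : Fin n) (huv : u ≠ v) (hadj : ¬ G.Adj u v) :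
    ∃ z : Fin n → ℝ, (∀ i, 0 ≤ z i) ∧ fClique G s z = 1 ∧
      fClique G (s + 1) z = fClique G (s + 1) y ∧ z u = 0 :=
  zero_coordinate_max_general (notMem_of_mem_cliqueFinset_of_not_adj huv hadj)
    (notMem_of_mem_cliqueFinset_of_not_adj huv hadj) (fun i => (hy i).le)
    ((hcov v).imp fun _ hS => ⟨hS.1, hS.2, fun i _ => hy i⟩) hy1 hmax
end

section
/- Let G be a simple graph on n vertices with clique number ω. Then for every integer s with 1 ≤ s ≤ ω, the number of s-cliques satisfies k_s(G) ≤ C(ω,s)·(n/ω)^s. -/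
open Finset

/-!
Let `kₜ` be the number of `t`-cliques of a graph `G` on `n` vertices without `(r + 1)`-cliques. The
common neighbours of a `t`-clique are exactly its one-vertex extensions, so their number, summed
over all `t`-cliques, is `(t + 1) kₜ₊₁`. A vertex that is not adjacent to all of a set `A` is
adjacent to all of `A \ {a}` for at most one `a ∈ A`; together with Cauchy–Schwarz this gives the
Moon–Moser inequality `((t + 1) kₜ₊₁)² ≤ kₜ (n kₜ₊₁ + t (t + 2) kₜ₊₂)`. Descending from `kᵣ₊₁ = 0`,
it yields `(t + 1) r kₜ₊₁ ≤ n (r - t) kₜ`, and these ratios multiply up to the bound on `kₛ`.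
-/

lemma cliqueFree_cliqueNum_succ {V : Type*} [Finite V] (G : SimpleGraph V) :
    G.CliqueFree (G.cliqueNum + 1) := by
  intro A hA
  have := SimpleGraph.IsClique.card_le_cliqueNum (tc := hA.isClique)
  have := hA.card_eq
  omega

section CliqueCounting

variable {V : Type*} [Fintype V] (G : SimpleGraph V) [DecidableRel G.Adj]

/-- The common neighbourhood of a finite set `A` of vertices: the vertices adjacent to every member
of `A`. It is all of `V` when `A` is empty. -/
def commonNeighborFinset (A : Finset V) : Finset V := {v | ∀ a ∈ A, G.Adj v a}

variable {G}

lemma mem_commonNeighborFinset {A : Finset V} {v : V} :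
    v ∈ commonNeighborFinset G A ↔ ∀ a ∈ A, G.Adj v a := by
  simp [commonNeighborFinset]

lemma notMem_of_mem_commonNeighborFinset {A : Finset V} {v : V}
    (hv : v ∈ commonNeighborFinset G A) : v ∉ A :=
  fun hvA => G.irrefl (mem_commonNeighborFinset.1 hv v hvA)

variable [DecidableEq V]

lemma mem_commonNeighborFinset_erase {A : Finset V} {a : V} (hA : G.IsClique (A : Set V))
    (ha : a ∈ A) : a ∈ commonNeighborFinset G (A.erase a) :=
  mem_commonNeighborFinset.2 fun _ hc =>
    hA ha (mem_of_mem_erase hc) (ne_of_mem_erase hc).symm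

lemma eq_of_mem_commonNeighborFinset_erase {A : Finset V} {a b v : V}
    (hv : v ∉ commonNeighborFinset G A) (ha : v ∈ commonNeighborFinset G (A.erase a))
    (hb : v ∈ commonNeighborFinset G (A.erase b)) : a = b := by
  by_contra hab
  refine hv (mem_commonNeighborFinset.2 fun c hc => ?_)
  rcases eq_or_ne c a with rfl | hca
  · exact mem_commonNeighborFinset.1 hb c (mem_erase.2 ⟨hab, hc⟩)
  · exact mem_commonNeighborFinset.1 ha c (mem_erase.2 ⟨hca, hc⟩)

variable (G)

lemma sum_cliqueFinset_sum_commonNeighborFinset {M : Type*} [AddCommMonoid M] (t : ℕ)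
    (f : Finset V → V → M) :
    ∑ C ∈ G.cliqueFinset t, ∑ v ∈ commonNeighborFinset G C, f C v
      = ∑ A ∈ G.cliqueFinset (t + 1), ∑ a ∈ A, f (A.erase a) a := by
  rw [sum_sigma', sum_sigma']
  refine sum_bij' (fun x _ => ⟨insert x.2 x.1, x.2⟩) (fun x _ => ⟨x.1.erase x.2, x.2⟩)
    ?_ ?_ ?_ ?_ ?_ <;>
    simp only [mem_sigma, SimpleGraph.mem_cliqueFinset_iff, Sigma.forall, and_imp]
  · exact fun C v hC hv => ⟨hC.insert (mem_commonNeighborFinset.1 hv), mem_insert_self v C⟩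
  · exact fun A a hA ha => ⟨hA.erase_of_mem ha, mem_commonNeighborFinset_erase hA.isClique ha⟩
  · exact fun C v _ hv => by rw [erase_insert (notMem_of_mem_commonNeighborFinset hv)]
  · exact fun A a _ ha => by rw [insert_erase ha]
  · exact fun C v _ hv => by rw [erase_insert (notMem_of_mem_commonNeighborFinset hv)]

lemma sum_card_commonNeighborFinset (t : ℕ) :
    ∑ C ∈ G.cliqueFinset t, #(commonNeighborFinset G C) = (t + 1) * #(G.cliqueFinset (t + 1)) := by
  calc ∑ C ∈ G.cliqueFinset t, #(commonNeighborFinset G C)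
      = ∑ A ∈ G.cliqueFinset (t + 1), #A := by
        simpa only [card_eq_sum_ones] using
          sum_cliqueFinset_sum_commonNeighborFinset G t (fun _ _ => 1)
    _ = (t + 1) * #(G.cliqueFinset (t + 1)) := by
        rw [sum_const_nat fun A hA => (SimpleGraph.mem_cliqueFinset_iff.1 hA).card_eq, mul_comm]

lemma sum_card_commonNeighborFinset_erase_le (A : Finset V) :
    ∑ a ∈ A, #(commonNeighborFinset G (A.erase a))
      ≤ Fintype.card V + (#A - 1) * #(commonNeighborFinset G A) := by
  have pointwise (v : V) : #{a ∈ A | v ∈ commonNeighborFinset G (A.erase a)}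
      ≤ 1 + (#A - 1) * if v ∈ commonNeighborFinset G A then 1 else 0 := by
    split_ifs with hv
    · have := card_filter_le A (fun a => v ∈ commonNeighborFinset G (A.erase a))
      omega
    · refine card_le_one.2 fun a ha b hb => ?_
      exact eq_of_mem_commonNeighborFinset_erase hv (mem_filter.1 ha).2 (mem_filter.1 hb).2
  calc ∑ a ∈ A, #(commonNeighborFinset G (A.erase a))
      = ∑ v : V, #{a ∈ A | v ∈ commonNeighborFinset G (A.erase a)} := by
        simpa [bipartiteAbove, bipartiteBelow] using
          sum_card_bipartiteAbove_eq_sum_card_bipartiteBelow (s := A) (t := univ)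
            (fun a v => v ∈ commonNeighborFinset G (A.erase a))
    _ ≤ ∑ v : V, (1 + (#A - 1) * if v ∈ commonNeighborFinset G A then 1 else 0) :=
        sum_le_sum fun v _ => pointwise v
    _ = Fintype.card V + (#A - 1) * #(commonNeighborFinset G A) := by
        simp [sum_add_distrib, mul_comm]

theorem moon_moser (t : ℕ) :
    ((t + 1) * #(G.cliqueFinset (t + 1))) ^ 2
      ≤ #(G.cliqueFinset t) * (Fintype.card V * #(G.cliqueFinset (t + 1))
        + t * ((t + 2) * #(G.cliqueFinset (t + 2)))) := by
  have sum_sq_le : ∑ C ∈ G.cliqueFinset t, #(commonNeighborFinset G C) ^ 2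
      ≤ Fintype.card V * #(G.cliqueFinset (t + 1))
        + t * ((t + 2) * #(G.cliqueFinset (t + 2))) := by
    calc ∑ C ∈ G.cliqueFinset t, #(commonNeighborFinset G C) ^ 2
        = ∑ A ∈ G.cliqueFinset (t + 1), ∑ a ∈ A, #(commonNeighborFinset G (A.erase a)) := by
          simp only [← sum_cliqueFinset_sum_commonNeighborFinset G t
            (fun C _ => #(commonNeighborFinset G C)), sum_const, smul_eq_mul, sq]
      _ ≤ ∑ A ∈ G.cliqueFinset (t + 1), (Fintype.card V + t * #(commonNeighborFinset G A)) := by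
          refine sum_le_sum fun A hA => ?_
          simpa only [(SimpleGraph.mem_cliqueFinset_iff.1 hA).card_eq, Nat.add_sub_cancel] using
            sum_card_commonNeighborFinset_erase_le G A
      _ = Fintype.card V * #(G.cliqueFinset (t + 1))
            + t * ((t + 2) * #(G.cliqueFinset (t + 2))) := by
          rw [sum_add_distrib, ← mul_sum, sum_card_commonNeighborFinset, sum_const, smul_eq_mul,
            mul_comm]
  rw [← sum_card_commonNeighborFinset]
  exact sq_sum_le_card_mul_sum_sq.trans (Nat.mul_le_mul_left _ sum_sq_le)

variable {G}

-- For `t > r` the truncated `r - t` is `0`, as is the left side: there are no `(t + 1)`-cliques.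
lemma card_cliqueFinset_succ_mul_le {r : ℕ} (hG : G.CliqueFree (r + 1)) (t : ℕ) :
    (t + 1) * #(G.cliqueFinset (t + 1)) * r
      ≤ Fintype.card V * (r - t) * #(G.cliqueFinset t) := by
  induction h : r - t generalizing t with
  | zero =>
    have no_cliques : #(G.cliqueFinset (t + 1)) = 0 :=
      card_eq_zero.2 (hG.mono (by omega)).cliqueFinset
    simp [no_cliques]
  | succ j ih =>
    obtain rfl : r = t + 1 + j := by omega
    have ratio_succ := ih (t + 1) (by omega)
    have mm := moon_moser G t
    generalize #(G.cliqueFinset t) = a at *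
    generalize #(G.cliqueFinset (t + 1)) = b at *
    generalize #(G.cliqueFinset (t + 1 + 1)) = c at *
    generalize Fintype.card V = n at *
    rcases b.eq_zero_or_pos with rfl | hb
    · simp
    refine Nat.le_of_mul_le_mul_left (c := (t + 1) * b) ?_ (by positivity)
    calc (t + 1) * b * ((t + 1) * b * (t + 1 + j))
        = ((t + 1) * b) ^ 2 * (t + 1 + j) := by ring
      _ ≤ a * (n * b + t * ((t + 2) * c)) * (t + 1 + j) := by gcongr
      _ = a * (n * b * (t + 1 + j) + t * ((t + 1 + 1) * c * (t + 1 + j))) := by ring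
      _ ≤ a * (n * b * (t + 1 + j) + t * (n * j * b)) := by gcongr
      _ = (t + 1) * b * (n * (j + 1) * a) := by ring

lemma card_cliqueFinset_mul_pow_le {r : ℕ} (hG : G.CliqueFree (r + 1)) (s : ℕ) :
    #(G.cliqueFinset s) * r ^ s ≤ r.choose s * Fintype.card V ^ s := by
  induction s with
  | zero => simpa using G.card_cliqueFinset_le (n := 0)
  | succ t ih =>
    refine Nat.le_of_mul_le_mul_left (c := t + 1) ?_ t.succ_pos
    calc (t + 1) * (#(G.cliqueFinset (t + 1)) * r ^ (t + 1))
        = (t + 1) * #(G.cliqueFinset (t + 1)) * r * r ^ t := by ring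
      _ ≤ Fintype.card V * (r - t) * #(G.cliqueFinset t) * r ^ t :=
          Nat.mul_le_mul_right _ (card_cliqueFinset_succ_mul_le hG t)
      _ = Fintype.card V * (r - t) * (#(G.cliqueFinset t) * r ^ t) := by ring
      _ ≤ Fintype.card V * (r - t) * (r.choose t * Fintype.card V ^ t) := by gcongr
      _ = r.choose t * (r - t) * Fintype.card V ^ (t + 1) := by ring
      _ = (t + 1) * (r.choose (t + 1) * Fintype.card V ^ (t + 1)) := by
          rw [← Nat.choose_succ_right_eq]; ring

theorem clique_count_upper_bound_general {r : ℕ} (hr : 0 < r) (hG : G.CliqueFree (r + 1))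
    (s : ℕ) :
    (#(G.cliqueFinset s) : ℝ) ≤ (r.choose s : ℝ) * ((Fintype.card V : ℝ) / (r : ℝ)) ^ s := by
  rw [div_pow, ← mul_div_assoc, le_div_iff₀ (by positivity)]
  exact_mod_cast card_cliqueFinset_mul_pow_le hG s

end CliqueCounting

/-- For a graph `G` on `n` vertices with clique number `ω` and `1 ≤ s ≤ ω`, the number of
`s`-cliques satisfies `k_s(G) ≤ C(ω,s)·(n/ω)^s`. -/
theorem clique_count_upper_bound {n : ℕ} (G : SimpleGraph (Fin n)) [DecidableRel G.Adj]
    (s : ℕ) (hs : 1 ≤ s) (hsw : s ≤ G.cliqueNum) :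
    (#(G.cliqueFinset s) : ℝ)
      ≤ (G.cliqueNum.choose s : ℝ) * ((n : ℝ) / (G.cliqueNum : ℝ)) ^ s := by
  simpa only [Fintype.card_fin] using
    clique_count_upper_bound_general (hs.trans hsw) (cliqueFree_cliqueNum_succ G) s
end

section
/- Let s ≥ 1 be an integer and let x_1,...,x_{s+1} be nonnegative reals such that the elementary symmetric polynomial of degree s satisfies e_s(x_1,...,x_{s+1}) = 1. Then x_1·x_2···x_{s+1} ≤ (s+1)^{-(s+1)/s}, and this bound is attained at x_1 = ··· = x_{s+1} = (s+1)^{-1/s}. -/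
open Finset

/-!
The products `y i = ∏_{j ≠ i} x j` are the terms of `e_s`, and each `x j` occurs in exactly `s` of
them, so `∏ y i = (∏ x j) ^ s`. The AM-GM inequality for the `y i` therefore bounds
`(∏ x j) ^ s` by `(e_s / (s + 1)) ^ (s + 1)`, with equality when all `x j` agree.
-/

section Erase

variable {ι M : Type*} [DecidableEq ι]

lemma powersetCard_card_sub_one {t : Finset ι} (ht : t.Nonempty) :
    t.powersetCard (#t - 1) = t.image t.erase := by
  refine (eq_of_subset_of_card_le (fun S hS => ?_) ?_).symm
  · obtain ⟨i, hi, rfl⟩ := mem_image.1 hS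
    exact mem_powersetCard.2 ⟨erase_subset i t, card_erase_of_mem hi⟩
  · rw [card_image_of_injOn t.erase_injOn, card_powersetCard,
      Nat.choose_symm (Nat.one_le_iff_ne_zero.2 ht.card_ne_zero), Nat.choose_one_right]

lemma sum_powersetCard_card_sub_one [AddCommMonoid M] {t : Finset ι} (ht : t.Nonempty)
    (f : Finset ι → M) :
    ∑ S ∈ t.powersetCard (#t - 1), f S = ∑ i ∈ t, f (t.erase i) := by
  rw [powersetCard_card_sub_one ht, sum_image t.erase_injOn]

lemma prod_prod_erase [CommMonoid M] (t : Finset ι) (x : ι → M) :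
    ∏ i ∈ t, ∏ j ∈ t.erase i, x j = (∏ i ∈ t, x i) ^ (#t - 1) :=
  calc
    ∏ i ∈ t, ∏ j ∈ t.erase i, x j = ∏ j ∈ t, ∏ _i ∈ t.erase j, x j :=
      prod_comm' fun i j => by simp only [mem_erase]; tauto
    _ = ∏ j ∈ t, x j ^ (#t - 1) :=
      prod_congr rfl fun j hj => by rw [prod_const, card_erase_of_mem hj]
    _ = (∏ i ∈ t, x i) ^ (#t - 1) := prod_pow t _ x

end Erase

section ProductBounds

variable {ι : Type*} {t : Finset ι} {x : ι → ℝ}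

lemma prod_le_sum_div_card_pow_card (hx : ∀ i ∈ t, 0 ≤ x i) :
    ∏ i ∈ t, x i ≤ ((∑ i ∈ t, x i) / #t) ^ #t := by
  rcases t.eq_empty_or_nonempty with rfl | ht
  · simp
  have amgm : (∏ i ∈ t, x i) ^ (#t : ℝ)⁻¹ ≤ (∑ i ∈ t, x i) / #t := by
    simpa using Real.geom_mean_le_arith_mean t 1 x (by simp) (by simpa using ht) hx
  have hprod : 0 ≤ ∏ i ∈ t, x i := prod_nonneg hx
  calc
    ∏ i ∈ t, x i = ((∏ i ∈ t, x i) ^ (#t : ℝ)⁻¹) ^ #t :=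
      (Real.rpow_inv_natCast_pow hprod ht.card_ne_zero).symm
    _ ≤ ((∑ i ∈ t, x i) / #t) ^ #t := by gcongr

lemma prod_pow_card_sub_one_le_sum_powersetCard_div_card_pow (hx : ∀ i ∈ t, 0 ≤ x i) :
    (∏ i ∈ t, x i) ^ (#t - 1) ≤
      ((∑ S ∈ t.powersetCard (#t - 1), ∏ i ∈ S, x i) / #t) ^ #t := by
  classical
  rcases t.eq_empty_or_nonempty with rfl | ht
  · simp
  rw [← prod_prod_erase, sum_powersetCard_card_sub_one ht]
  exact prod_le_sum_div_card_pow_card fun i _ =>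
    prod_nonneg fun j hj => hx j (mem_of_mem_erase hj)

lemma sum_powersetCard_prod_const {R : Type*} [CommSemiring R] (k : ℕ) (t : Finset ι) (a : R) :
    ∑ S ∈ t.powersetCard k, ∏ _i ∈ S, a = (#t).choose k * a ^ k := by
  simp only [prod_const, sum_powersetCard k t (a ^ ·), nsmul_eq_mul]

lemma prod_le_prod_const_of_sum_powersetCard_le {a : ℝ} (ht : 1 < #t) (hx : ∀ i ∈ t, 0 ≤ x i)
    (ha : 0 ≤ a)
    (h : ∑ S ∈ t.powersetCard (#t - 1), ∏ i ∈ S, x i ≤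
      ∑ S ∈ t.powersetCard (#t - 1), ∏ _i ∈ S, a) :
    ∏ i ∈ t, x i ≤ ∏ _i ∈ t, a := by
  have hcard : (0 : ℝ) < #t := by exact_mod_cast zero_lt_one.trans ht
  have hmean : (∑ S ∈ t.powersetCard (#t - 1), ∏ i ∈ S, x i) / #t ≤ a ^ (#t - 1) := by
    rwa [sum_powersetCard_prod_const, Nat.choose_symm ht.le, Nat.choose_one_right,
      ← div_le_iff₀' hcard] at h
  have hmean_nonneg : 0 ≤ (∑ S ∈ t.powersetCard (#t - 1), ∏ i ∈ S, x i) / #t :=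
    div_nonneg (sum_nonneg fun S hS => prod_nonneg fun i hi =>
      hx i ((mem_powersetCard.1 hS).1 hi)) hcard.le
  rw [prod_const]
  refine le_of_pow_le_pow_left₀ (Nat.sub_ne_zero_of_lt ht) (by positivity) ?_
  calc
    (∏ i ∈ t, x i) ^ (#t - 1) ≤
        ((∑ S ∈ t.powersetCard (#t - 1), ∏ i ∈ S, x i) / #t) ^ #t :=
      prod_pow_card_sub_one_le_sum_powersetCard_div_card_pow hx
    _ ≤ (a ^ (#t - 1)) ^ #t := by gcongr
    _ = (a ^ #t) ^ (#t - 1) := pow_right_comm a _ _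

end ProductBounds

lemma rpow_neg_one_div_pow {b : ℝ} (hb : 0 ≤ b) (y : ℝ) (m : ℕ) :
    (b ^ (-1 / y)) ^ m = b ^ (-(m / y)) := by
  rw [← Real.rpow_mul_natCast hb]
  ring_nf

/-- If `x_1, …, x_{s+1}` are nonnegative reals whose elementary symmetric polynomial of
degree `s` equals `1`, then `x_1 ⋯ x_{s+1} ≤ (s+1)^{-(s+1)/s}`, and the bound is attained
at `x_1 = ⋯ = x_{s+1} = (s+1)^{-1/s}`. -/
theorem esymm_prod_bound (s : ℕ) (hs : 1 ≤ s) :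
    (∀ x : Fin (s + 1) → ℝ, (∀ i, 0 ≤ x i) →
        (∑ S ∈ (Finset.univ : Finset (Fin (s + 1))).powersetCard s, ∏ i ∈ S, x i) = 1 →
        ∏ i, x i ≤ ((s : ℝ) + 1) ^ (-(((s : ℝ) + 1) / (s : ℝ)))) ∧
    ((∑ S ∈ (Finset.univ : Finset (Fin (s + 1))).powersetCard s,
        ∏ _i ∈ S, ((s : ℝ) + 1) ^ (-(1 : ℝ) / (s : ℝ))) = 1 ∧
      (∏ _i : Fin (s + 1), ((s : ℝ) + 1) ^ (-(1 : ℝ) / (s : ℝ)))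
        = ((s : ℝ) + 1) ^ (-(((s : ℝ) + 1) / (s : ℝ)))) := by
  have hs_ne : (s : ℝ) ≠ 0 := by positivity
  have hbase : (0 : ℝ) ≤ s + 1 := by positivity
  set a : ℝ := ((s : ℝ) + 1) ^ (-(1 : ℝ) / (s : ℝ)) with ha
  have esymm_const : ∑ S ∈ (univ : Finset (Fin (s + 1))).powersetCard s, ∏ _i ∈ S, a = 1 := by
    rw [sum_powersetCard_prod_const, ha, rpow_neg_one_div_pow hbase, div_self hs_ne,
      Real.rpow_neg_one, card_fin, Nat.choose_succ_self_right, Nat.cast_succ]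
    exact mul_inv_cancel₀ (by positivity)
  have prod_const_eq :
      ∏ _i : Fin (s + 1), a = ((s : ℝ) + 1) ^ (-(((s : ℝ) + 1) / (s : ℝ))) := by
    rw [prod_const, card_fin, ha, rpow_neg_one_div_pow hbase, Nat.cast_succ]
  refine ⟨fun x hx esymm_eq => ?_, esymm_const, prod_const_eq⟩
  rw [← prod_const_eq]
  refine prod_le_prod_const_of_sum_powersetCard_le ?_ (fun i _ => hx i) (by positivity) ?_
  · rw [card_fin]; omega
  · simpa using (esymm_eq.trans esymm_const.symm).le
end
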